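/- Janiszewski's theorem: Let A₁, A₂ ⊆ Ĉ be closed sets such that A₁ ∩ A₂ is connected. If two points a, b ∈ Ĉ \ (A₁ ∪ A₂) lie in the same connected component of Ĉ \ A₁ and in the same connected component of Ĉ \ A₂, then they lie in the same connected component of Ĉ \ (A₁ ∪ A₂). -/

import Mathlib

open Set Filter Metric Topology

/-!
After a homeomorphism of the sphere we may assume `b = ∞`, so that `A₁` and `A₂` become compact
subsets of the plane. By a criterion of Eilenberg, a closed set `A ∌ a, ∞` does not separate `a`
from `∞` if and only if `z ↦ z - a` has a continuous logarithm on `A`: moving `a` inside a component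
of the complement only changes `z - a` by an exponential factor, and conversely, if the component
of `a` were bounded, replacing `z - a` inside it by the exponential of an extension of the logarithm
would give a zero-free continuous function on `ℂ` that equals `z - a` on a large circle. Finally,
logarithms on `A₁` and on `A₂` differ by a constant on the connected set `A₁ ∩ A₂`, so they can be
glued to a logarithm on `A₁ ∪ A₂`.
-/

open Bornology Complex Module
open scoped OnePoint

section Homogeneity

theorem exists_homeomorph_sphere_apply_eq {E : Type*} [NormedAddCommGroup E]
    [InnerProductSpace ℝ E] {r : ℝ} (x y : sphere (0 : E) r) :
    ∃ e : sphere (0 : E) r ≃ₜ sphere (0 : E) r, e x = y := by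
  let ρ := (Submodule.span ℝ {(x - y : E)})ᗮ.reflection
  have hρ : ρ x = y := Submodule.reflection_sub (by simp)
  exact ⟨ρ.toHomeomorph.subtype (by simp), Subtype.ext hρ⟩

theorem exists_homeomorph_onePoint_apply_eq {V : Type*} [AddCommGroup V] [Module ℝ V]
    [FiniteDimensional ℝ V] [TopologicalSpace V] [IsTopologicalAddGroup V] [ContinuousSMul ℝ V]
    [T2Space V] (x y : OnePoint V) :
    ∃ e : OnePoint V ≃ₜ OnePoint V, e x = y := by
  let σ := onePointEquivSphereOfFinrankEq (V := V) (ι := Fin (finrank ℝ V + 1)) (by simp)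
  obtain ⟨e, he⟩ := exists_homeomorph_sphere_apply_eq (σ x) (σ y)
  exact ⟨(σ.trans e).trans σ.symm, by simp [he]⟩

end Homogeneity

section OnePointCompactification

theorem isPreconnected_preimage_coe_of_infty_notMem {X : Type*} [TopologicalSpace X]
    {A : Set (OnePoint X)} (hA : IsPreconnected A) (hinf : ∞ ∉ A) :
    IsPreconnected ((↑) ⁻¹' A : Set X) :=
  hA.preimage_of_isOpenMap OnePoint.coe_injective OnePoint.isOpenMap_coe fun _ hx =>
    OnePoint.ne_infty_iff_exists.1 (ne_of_mem_of_not_mem hx hinf)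

variable {M : Type*} [PseudoMetricSpace M]

theorem isBounded_preimage_coe_of_infty_notMem {A : Set (OnePoint M)} (hA : IsClosed A)
    (hinf : ∞ ∉ A) : IsBounded ((↑) ⁻¹' A : Set M) :=
  ((OnePoint.isClosed_iff_of_notMem hinf).1 hA).2.isBounded

theorem infty_mem_closure_image_coe [ProperSpace M] {s : Set M} (hs : ¬ IsBounded s) :
    ∞ ∈ closure ((↑) '' s : Set (OnePoint M)) := by
  have hfreq : ∃ᶠ x in cobounded M, x ∈ s := fun h => hs (isBounded_def.2 h)
  rw [cobounded_eq_cocompact, ← coclosedCompact_eq_cocompact] at hfreq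
  exact mem_closure_iff_frequently.2
    (OnePoint.tendsto_coe_infty.frequently (hfreq.mono fun _ => mem_image_of_mem _))

theorem infty_mem_connectedComponentIn_compl_of_not_isBounded [ProperSpace M]
    {A : Set (OnePoint M)} (hA : ∞ ∉ A) {x : M}
    (hx : ¬ IsBounded (connectedComponentIn ((↑) ⁻¹' Aᶜ : Set M) x)) :
    ∞ ∈ connectedComponentIn Aᶜ (x : OnePoint M) := by
  set U := connectedComponentIn ((↑) ⁻¹' Aᶜ : Set M) x
  have hxU : x ∈ U :=
    mem_connectedComponentIn (connectedComponentIn_nonempty_iff.1 (nonempty_of_not_isBounded hx))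
  have hU : IsPreconnected ((↑) '' U : Set (OnePoint M)) :=
    isPreconnected_connectedComponentIn.image _ OnePoint.continuous_coe.continuousOn
  have hpre : IsPreconnected (insert ∞ ((↑) '' U : Set (OnePoint M))) :=
    hU.subset_closure (subset_insert _ _)
      (insert_subset (infty_mem_closure_image_coe hx) subset_closure)
  exact hpre.subset_connectedComponentIn (mem_insert_of_mem _ (mem_image_of_mem _ hxU))
    (insert_subset hA (image_subset_iff.2 (connectedComponentIn_subset _ _))) (mem_insert _ _)

end OnePointCompactification

section ConnectedComponents

variable {X Y : Type*} [TopologicalSpace X] [TopologicalSpace Y]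

theorem apply_mem_connectedComponentIn_compl_image_iff (e : X ≃ₜ Y) {A : Set X} {x y : X}
    (hx : x ∉ A) :
    e y ∈ connectedComponentIn (e '' A)ᶜ (e x) ↔ y ∈ connectedComponentIn Aᶜ x := by
  rw [← image_compl_eq e.bijective, ← e.image_connectedComponentIn hx, e.injective.mem_set_image]

theorem frontier_connectedComponentIn_subset_compl [LocallyConnectedSpace X] {F : Set X}
    (hF : IsOpen F) (x : X) : frontier (connectedComponentIn F x) ⊆ Fᶜ := by
  intro z hz hzF
  have hzz := mem_connectedComponentIn hzF
  obtain ⟨w, hwz, hwx⟩ := mem_closure_iff.1 hz.1 _ hF.connectedComponentIn hzz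
  have hxz : connectedComponentIn F x = connectedComponentIn F z :=
    (connectedComponentIn_eq hwx).trans (connectedComponentIn_eq hwz).symm
  exact hz.2 (hF.connectedComponentIn.interior_eq.symm ▸ hxz ▸ hzz)

end ConnectedComponents

section LogEquivOn

variable {X : Type*} [TopologicalSpace X] {S T : Set X} {f g k : X → ℂ}

theorem exists_eqOn_add_const_of_exp_eqOn (hS : IsPreconnected S) (hf : ContinuousOn f S)
    (hg : ContinuousOn g S) (h : ∀ x ∈ S, exp (f x) = exp (g x)) :
    ∃ c : ℂ, exp c = 1 ∧ EqOn f (fun x => g x + c) S := by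
  rcases S.eq_empty_or_nonempty with rfl | ⟨w, hw⟩
  · exact ⟨0, exp_zero, eqOn_empty _ _⟩
  · have hc : exp (f w - g w) = 1 := by rw [exp_sub, h w hw, div_self (exp_ne_zero _)]
    refine ⟨f w - g w, hc, isCoveringMap_exp.eqOn_of_comp_eqOn hS hf
      (hg.add continuousOn_const) (fun x hx => Subtype.ext ?_) hw (by ring)⟩
    simpa [exp_add, hc] using h x hx

/-- `f` and `g` differ on `S` by a factor with a continuous logarithm. For `g = 1` this says that
`f` itself has a continuous logarithm on `S`. Writing it without the quotient `f / g` makes this an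
equivalence relation also for functions with zeros. -/
def LogEquivOn (S : Set X) (f g : X → ℂ) : Prop :=
  ∃ h : X → ℂ, ContinuousOn h S ∧ ∀ x ∈ S, f x = exp (h x) * g x

namespace LogEquivOn

theorem refl (S : Set X) (f : X → ℂ) : LogEquivOn S f f :=
  ⟨0, continuousOn_const, by simp⟩

theorem symm (H : LogEquivOn S f g) : LogEquivOn S g f := by
  obtain ⟨h, hc, hh⟩ := H
  refine ⟨-h, hc.neg, fun x hx => ?_⟩
  rw [hh x hx, ← mul_assoc, ← exp_add]
  simp

theorem trans (H : LogEquivOn S f g) (H' : LogEquivOn S g k) : LogEquivOn S f k := by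
  obtain ⟨h, hc, hh⟩ := H
  obtain ⟨h', hc', hh'⟩ := H'
  refine ⟨h + h', hc.add hc', fun x hx => ?_⟩
  rw [hh x hx, hh' x hx, ← mul_assoc, ← exp_add, Pi.add_apply]

theorem mono (H : LogEquivOn T f g) (hST : S ⊆ T) : LogEquivOn S f g := by
  obtain ⟨h, hc, hh⟩ := H
  exact ⟨h, hc.mono hST, fun x hx => hh x (hST hx)⟩

theorem const_one {c : ℂ} (hc : c ≠ 0) : LogEquivOn S (fun _ => c) 1 :=
  ⟨fun _ => log c, continuousOn_const, by simp [exp_log hc]⟩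

theorem of_norm_sub_lt (hf : ContinuousOn f S) (hg : ContinuousOn g S)
    (H : ∀ x ∈ S, ‖f x - g x‖ < ‖g x‖) : LogEquivOn S f g := by
  have hg₀ : ∀ x ∈ S, g x ≠ 0 := fun x hx => norm_pos_iff.1 ((norm_nonneg _).trans_lt (H x hx))
  have hslit : ∀ x ∈ S, f x / g x ∈ slitPlane := fun x hx => by
    apply ball_one_subset_slitPlane
    rw [mem_ball, dist_eq_norm, div_sub_one (hg₀ x hx), norm_div,
      div_lt_one (norm_pos_iff.2 (hg₀ x hx))]
    exact H x hx
  refine ⟨fun x => log (f x / g x), (hf.div hg hg₀).clog hslit, fun x hx => ?_⟩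
  rw [exp_log (slitPlane_ne_zero (hslit x hx)), div_mul_cancel₀ _ (hg₀ x hx)]

theorem one_of_forall_ne_zero [SimplyConnectedSpace X] [LocallyPathConnectedSpace X]
    (hf : Continuous f) (hf₀ : ∀ x, f x ≠ 0) : LogEquivOn S f 1 := by
  let x₀ : X := Classical.arbitrary X
  obtain ⟨l, ⟨-, hl⟩, -⟩ := isCoveringMapOn_exp.existsUnique_continuousMap_lifts ⟨f, hf⟩
    (a₀ := x₀) (exp_log (hf₀ x₀)) hf₀
  exact ⟨l, l.continuous.continuousOn, fun x _ => by simpa using (congrFun hl x).symm⟩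

theorem union (hS : IsClosed S) (hT : IsClosed T) (hST : IsPreconnected (S ∩ T))
    (hg : ∀ x ∈ S ∩ T, g x ≠ 0) (HS : LogEquivOn S f g) (HT : LogEquivOn T f g) :
    LogEquivOn (S ∪ T) f g := by
  classical
  obtain ⟨h, hc, hh⟩ := HS
  obtain ⟨h', hc', hh'⟩ := HT
  obtain ⟨c, hexp, heq⟩ := exists_eqOn_add_const_of_exp_eqOn hST (hc.mono inter_subset_left)
    (hc'.mono inter_subset_right)
    fun x hx => mul_right_cancel₀ (hg x hx) ((hh x hx.1).symm.trans (hh' x hx.2))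
  let l := S.piecewise h (fun x => h' x + c)
  have hlS : EqOn l h S := piecewise_eqOn _ _ _
  have hlT : EqOn l (fun x => h' x + c) T := fun x hxT => by
    by_cases hxS : x ∈ S
    · exact (hlS hxS).trans (heq ⟨hxS, hxT⟩)
    · exact piecewise_eq_of_notMem _ _ _ hxS
  refine ⟨l, (hc.congr hlS).union_of_isClosed ((hc'.add continuousOn_const).congr hlT) hS hT, ?_⟩
  rintro x (hx | hx)
  · rw [hlS hx, hh x hx]
  · rw [hlT hx, exp_add, hexp, mul_one, hh' x hx]

end LogEquivOn

end LogEquivOn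

section Plane

variable {K U : Set ℂ} {a : ℂ}

theorem eventually_logEquivOn_sub (hK : IsClosed K) (ha : a ∉ K) :
    ∀ᶠ b in 𝓝 a, LogEquivOn K (fun z => z - a) (fun z => z - b) := by
  obtain ⟨ε, hε, hball⟩ := Metric.isOpen_iff.1 hK.isOpen_compl a ha
  filter_upwards [ball_mem_nhds a hε] with b hb
  refine (LogEquivOn.of_norm_sub_lt (by fun_prop) (by fun_prop) fun z hz => ?_).symm
  have hzε : ε ≤ ‖z - a‖ := by
    rw [← dist_eq_norm]
    exact not_lt.1 fun h => hball h hz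
  calc ‖z - b - (z - a)‖ = dist b a := by rw [sub_sub_sub_cancel_left, dist_eq_norm']
    _ < ε := hb
    _ ≤ ‖z - a‖ := hzε

theorem eventually_logEquivOn_sub_one (hK : IsBounded K) :
    ∀ᶠ b in cobounded ℂ, LogEquivOn K (fun z => z - b) 1 := by
  obtain ⟨M, hM, hKM⟩ := hK.exists_pos_norm_le
  filter_upwards [tendsto_norm_cobounded_atTop.eventually_gt_atTop M] with b hb
  have hb₀ : -b ≠ 0 := neg_ne_zero.2 (norm_pos_iff.1 (hM.trans hb))
  have hnear : ∀ z ∈ K, ‖z - b - -b‖ < ‖-b‖ := fun z hz => by simpa using (hKM z hz).trans_lt hb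
  exact (LogEquivOn.of_norm_sub_lt (by fun_prop) continuousOn_const hnear).trans
    (LogEquivOn.const_one hb₀)

theorem not_logEquivOn_sphere_sub_one {r : ℝ} (hr : 0 < r) :
    ¬ LogEquivOn (sphere a r) (fun z => z - a) 1 := by
  rintro ⟨h, hc, hh⟩
  have hlift : ∀ θ : ℝ, exp (h (circleMap a r θ)) = exp (Real.log r + θ * I) := fun θ => by
    have hcircle : circleMap a r θ - a = exp (h (circleMap a r θ)) := by
      simpa using hh _ (circleMap_mem_sphere a hr.le θ)
    rw [← hcircle, exp_add, ← ofReal_exp, Real.exp_log hr, circleMap_sub_center, circleMap_zero]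
  obtain ⟨c, -, hcθ⟩ := exists_eqOn_add_const_of_exp_eqOn isPreconnected_univ
    (hc.comp_continuous (continuous_circleMap a r) (circleMap_mem_sphere a hr.le)).continuousOn
    (by fun_prop) fun θ _ => hlift θ
  have h₀ : h (circleMap a r 0) = Real.log r + (0 : ℝ) * I + c := hcθ (mem_univ 0)
  have h₁ : h (circleMap a r (2 * Real.pi)) = Real.log r + (2 * Real.pi : ℝ) * I + c :=
    hcθ (mem_univ _)
  rw [(periodic_circleMap a r).eq, h₀] at h₁
  push_cast at h₁
  exact two_pi_I_ne_zero (by linear_combination -h₁)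

/-- Borsuk's theorem. -/
theorem not_logEquivOn_frontier_sub_one (hU : IsBounded U) (ha : a ∈ U) :
    ¬ LogEquivOn (frontier U) (fun z => z - a) 1 := by
  classical
  rintro ⟨h, hc, hh⟩
  obtain ⟨H, hH⟩ := ContinuousMap.exists_restrict_eq isClosed_frontier
    ⟨(frontier U).domRestrict h, hc.domRestrict⟩
  have hHh : ∀ z ∈ frontier U, H z = h z := fun z hz => DFunLike.congr_fun hH ⟨z, hz⟩
  let G : ℂ → ℂ := U.piecewise (fun z => exp (H z)) (fun z => z - a)
  have hG : Continuous G := Continuous.piecewise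
    (fun z hz => by simpa [hHh z hz] using (hh z hz).symm) (by fun_prop) (by fun_prop)
  have hG₀ : ∀ z, G z ≠ 0 := fun z => by
    by_cases hz : z ∈ U
    · simp [G, hz]
    · simpa [G, hz, sub_eq_zero] using fun h : z = a => hz (h ▸ ha)
  obtain ⟨r, hr, hUr⟩ := hU.subset_ball_lt 0 a
  obtain ⟨L, hL, hLG⟩ : LogEquivOn (sphere a r) G 1 := LogEquivOn.one_of_forall_ne_zero hG hG₀
  refine not_logEquivOn_sphere_sub_one hr ⟨L, hL, fun z hz => ?_⟩
  have hzU : z ∉ U := fun h => (mem_ball.1 (hUr h)).ne (mem_sphere.1 hz)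
  simpa [G, hzU] using hLG z hz

theorem not_isBounded_connectedComponentIn_of_logEquivOn (hK : IsClosed K) (ha : a ∉ K)
    (hlog : LogEquivOn K (fun z => z - a) 1) : ¬ IsBounded (connectedComponentIn Kᶜ a) :=
  fun hbdd => not_logEquivOn_frontier_sub_one hbdd (mem_connectedComponentIn ha) <| hlog.mono <| by
    simpa using frontier_connectedComponentIn_subset_compl hK.isOpen_compl a

end Plane

section Sphere

/-- The polynomial `z ↦ z - p` vanishing at a finite point `p`, extended by the constant `1` to
`p = ∞`. -/
def linearFactor (p : OnePoint ℂ) : ℂ → ℂ :=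
  p.elim 1 fun a z => z - a

theorem linearFactor_infty : linearFactor ∞ = 1 := rfl

variable {A B : Set (OnePoint ℂ)} {p q : OnePoint ℂ}

theorem eventually_logEquivOn_linearFactor (hA : IsClosed A) (hp : p ∉ A) :
    ∀ᶠ q in 𝓝 p, LogEquivOn ((↑) ⁻¹' A) (linearFactor p) (linearFactor q) := by
  induction p using OnePoint.rec with
  | infty =>
    rw [OnePoint.nhds_infty_eq, coclosedCompact_eq_cocompact, ← cobounded_eq_cocompact,
      eventually_sup, eventually_map]
    have hbdd := isBounded_preimage_coe_of_infty_notMem hA hp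
    exact ⟨(eventually_logEquivOn_sub_one hbdd).mono fun _ => .symm, LogEquivOn.refl _ _⟩
  | coe a =>
    rw [OnePoint.nhds_coe_eq, eventually_map]
    exact eventually_logEquivOn_sub (hA.preimage OnePoint.continuous_coe) hp

theorem logEquivOn_linearFactor_of_mem_connectedComponentIn (hA : IsClosed A)
    (hq : q ∈ connectedComponentIn Aᶜ p) :
    LogEquivOn ((↑) ⁻¹' A) (linearFactor p) (linearFactor q) := by
  have hp : p ∈ Aᶜ := connectedComponentIn_nonempty_iff.1 ⟨q, hq⟩
  refine isPreconnected_connectedComponentIn.induction₂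
    (fun x y => LogEquivOn ((↑) ⁻¹' A) (linearFactor x) (linearFactor y)) (fun x hx => ?_)
    (fun _ _ _ _ _ _ => .trans) (fun _ _ _ _ => .symm) (mem_connectedComponentIn hp) hq
  exact mem_nhdsWithin_of_mem_nhds
    (eventually_logEquivOn_linearFactor hA (connectedComponentIn_subset _ _ hx))

/-- Eilenberg's separation criterion. -/
theorem infty_mem_connectedComponentIn_compl_iff (hA : IsClosed A) (hinf : ∞ ∉ A) (hp : p ∉ A) :
    ∞ ∈ connectedComponentIn Aᶜ p ↔ LogEquivOn ((↑) ⁻¹' A) (linearFactor p) 1 := by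
  refine ⟨fun h => linearFactor_infty ▸ logEquivOn_linearFactor_of_mem_connectedComponentIn hA h,
    fun hlog => ?_⟩
  induction p using OnePoint.rec with
  | infty => exact mem_connectedComponentIn hinf
  | coe a =>
    exact infty_mem_connectedComponentIn_compl_of_not_isBounded hinf
      (not_isBounded_connectedComponentIn_of_logEquivOn (hA.preimage OnePoint.continuous_coe) hp
        hlog)

theorem infty_mem_connectedComponentIn_compl_union (hA : IsClosed A) (hB : IsClosed B)
    (hAB : IsPreconnected (A ∩ B)) (hpA : ∞ ∈ connectedComponentIn Aᶜ p)
    (hpB : ∞ ∈ connectedComponentIn Bᶜ p) : ∞ ∈ connectedComponentIn (A ∪ B)ᶜ p := by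
  have hinfA : ∞ ∉ A := connectedComponentIn_subset _ _ hpA
  have hinfB : ∞ ∉ B := connectedComponentIn_subset _ _ hpB
  have hp : p ∉ A ∪ B := not_or.2
    ⟨connectedComponentIn_nonempty_iff.1 ⟨_, hpA⟩, connectedComponentIn_nonempty_iff.1 ⟨_, hpB⟩⟩
  rw [infty_mem_connectedComponentIn_compl_iff hA hinfA (hp <| .inl ·)] at hpA
  rw [infty_mem_connectedComponentIn_compl_iff hB hinfB (hp <| .inr ·)] at hpB
  rw [infty_mem_connectedComponentIn_compl_iff (hA.union hB) (not_or.2 ⟨hinfA, hinfB⟩) hp]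
  have hAB' : IsPreconnected ((↑) ⁻¹' (A ∩ B) : Set ℂ) :=
    isPreconnected_preimage_coe_of_infty_notMem hAB fun h => hinfA h.1
  exact hpA.union (hA.preimage OnePoint.continuous_coe) (hB.preimage OnePoint.continuous_coe)
    hAB' (fun _ _ => one_ne_zero) hpB

end Sphere

/-- Janiszewski's theorem on the Riemann sphere `Ĉ = OnePoint ℂ`: if `A₁, A₂` are
closed with connected intersection, and two points are separated neither by `A₁`
nor by `A₂`, then they are not separated by `A₁ ∪ A₂`. -/
theorem stmt_4 (A₁ A₂ : Set (OnePoint ℂ)) (h₁ : IsClosed A₁) (h₂ : IsClosed A₂)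
    (hconn : IsPreconnected (A₁ ∩ A₂)) (a b : OnePoint ℂ)
    (ha : a ∉ A₁ ∪ A₂) (hb : b ∉ A₁ ∪ A₂)
    (hc₁ : b ∈ connectedComponentIn A₁ᶜ a)
    (hc₂ : b ∈ connectedComponentIn A₂ᶜ a) :
    b ∈ connectedComponentIn (A₁ ∪ A₂)ᶜ a := by
  obtain ⟨e, he⟩ := exists_homeomorph_onePoint_apply_eq b ∞
  rw [← apply_mem_connectedComponentIn_compl_image_iff e (ha <| .inl ·), he] at hc₁
  rw [← apply_mem_connectedComponentIn_compl_image_iff e (ha <| .inr ·), he] at hc₂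
  rw [← apply_mem_connectedComponentIn_compl_image_iff e ha, he, image_union]
  have hconn' : IsPreconnected (e '' A₁ ∩ e '' A₂) := by
    rw [← image_inter e.injective]
    exact hconn.image e e.continuous.continuousOn
  exact infty_mem_connectedComponentIn_compl_union (e.isClosed_image.2 h₁) (e.isClosed_image.2 h₂)
    hconn' hc₁ hc₂
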